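/- Let α be a set (of type symbols), u ∈ α a distinguished element (the universe type), and R a binary relation on α (the declared direct-subtype relation) such that the converse of R is well-founded (there is no infinite chain a0 R a1 R a2 R …). Define the completed direct-subtype relation R' by: R' a b holds iff R a b holds, or (a ≠ u, b = u, and a has no R-successor). Then for every a ≠ u the transitive closure of R' relates a to u, i.e., there is a nonempty R'-path from a to u. -/

import Mathlib

/-- The direct-subtype relation completed by the universe type `u`: to the declared relation `R` it
adds the implicit supertype `u` of every other type that has no declared direct supertype. -/
def DirectSubtype {α : Type*} (u : α) (R : α → α → Prop) (a b : α) : Prop :=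
  R a b ∨ (a ≠ u ∧ b = u ∧ ∀ c, ¬ R a c)

section

open Relation

variable {α : Type*} {R : α → α → Prop}

theorem exists_reflTransGen_forall_not_of_acc {a : α} (ha : Acc (flip R) a) :
    ∃ m, ReflTransGen R a m ∧ ∀ c, ¬ R m c := by
  induction ha with
  | intro a _ ih =>
    by_cases hsucc : ∃ b, R a b
    · obtain ⟨b, hab⟩ := hsucc
      obtain ⟨m, hbm, hm⟩ := ih b hab
      exact ⟨m, hbm.head hab, hm⟩
    · exact ⟨a, .refl, not_exists.mp hsucc⟩

theorem DirectSubtype.reflTransGen_universe_of_forall_not (u : α) {m : α} (hm : ∀ c, ¬ R m c) :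
    ReflTransGen (DirectSubtype u R) m u := by
  obtain rfl | hmu := eq_or_ne m u
  · exact .refl
  · exact .single (.inr ⟨hmu, rfl, hm⟩)

theorem every_type_subtype_of_universe_general {u a : α} (hau : a ≠ u)
    (hterm : ∃ m, ReflTransGen R a m ∧ ∀ c, ¬ R m c) :
    TransGen (DirectSubtype u R) a u := by
  obtain ⟨m, ham, hm⟩ := hterm
  have hpath : ReflTransGen (DirectSubtype u R) a u :=
    (ReflTransGen.mono (fun _ _ => Or.inl) _ _ ham).trans
      (DirectSubtype.reflTransGen_universe_of_forall_not u hm)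
  exact (reflTransGen_iff_eq_or_transGen.mp hpath).resolve_left hau.symm

end

/-- abstract form of Proposition 1.
`α` is the set of type symbols, `u` the universe type, `R` the declared
direct-subtype relation, whose converse is assumed well-founded (i.e. there is
no infinite chain `a0 R a1 R a2 R …`).  The completed direct-subtype relation
`R'` adds `a R' u` for every `a ≠ u` without any declared `R`-successor.
Then every `a ≠ u` is related to `u` by the transitive closure of `R'`
(a nonempty `R'`-path from `a` to `u`). -/
theorem every_type_subtype_of_universe {α : Type*} (u : α) (R : α → α → Prop)
    (hwf : WellFounded (flip R)) :
    ∀ a : α, a ≠ u →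
      Relation.TransGen (fun a b => R a b ∨ (a ≠ u ∧ b = u ∧ ∀ c, ¬ R a c)) a u :=
  fun a hau => every_type_subtype_of_universe_general hau
    (exists_reflTransGen_forall_not_of_acc (hwf.apply a))
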